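/- Let n ≥ 6 and let M be a multiset of n positive integers, each at least 2, with exactly three entries equal to 2, and suppose M is outerplane-unigraphic. Then for every outerplane graph G on n vertices with degree multiset M, the chord graph of the set S of chords of G contains exactly one cycle, and that cycle is a triangle; moreover, deleting from the chord graph its three chord-free vertices (the three isolated vertices) yields a connected graph. (This is the paper's Lemma 5, stated for p = n+1 ≥ 7.) -/

import Mathlib

/-- The vertices strictly between `a` and `b`, traversing the cycle `ZMod n`
from `a` towards `b` in the direction of increasing residues. -/
def Between (n : ℕ) (a b v : ZMod n) : Prop :=
  0 < (v - a).val ∧ (v - a).val < (b - a).val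

/-- `e` is an edge of the standard `n`-cycle on `ZMod n`. -/
def IsCycleEdge (n : ℕ) (e : Sym2 (ZMod n)) : Prop :=
  ∃ i : ZMod n, e = s(i, i + 1)

/-- A chord: an unordered pair of distinct vertices of `ZMod n` that is not an
edge of the standard `n`-cycle. -/
def IsChord (n : ℕ) (e : Sym2 (ZMod n)) : Prop :=
  ¬ e.IsDiag ∧ ¬ IsCycleEdge n e

/-- Two chords cross if exactly one endpoint of the second lies strictly between
the endpoints of the first (traversing in the direction of increasing residues). -/
def Cross (n : ℕ) (e f : Sym2 (ZMod n)) : Prop :=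
  ∀ a b c d : ZMod n, e = s(a, b) → f = s(c, d) →
    Xor' (Between n a b c) (Between n a b d)

/-- `S` is a set of pairwise non-crossing chords of the standard `n`-cycle. -/
def NonCrossingChords (n : ℕ) (S : Set (Sym2 (ZMod n))) : Prop :=
  (∀ e ∈ S, IsChord n e) ∧ ∀ e ∈ S, ∀ f ∈ S, e ≠ f → ¬ Cross n e f

/-- The chord graph of a set `S` of chords: the simple graph on `ZMod n`
whose edge set is `S`. -/
def chordGraph (n : ℕ) (S : Set (Sym2 (ZMod n))) : SimpleGraph (ZMod n) :=
  SimpleGraph.fromEdgeSet S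

/-- A vertex is chord-free for `S` if it is incident to no chord of `S`. -/
def ChordFree (n : ℕ) (S : Set (Sym2 (ZMod n))) (v : ZMod n) : Prop :=
  ∀ e ∈ S, v ∉ e

/-- An outerplane graph on `n` vertices: a simple graph on `ZMod n` whose edge
set is the (disjoint) union of the standard `n`-cycle and a set of pairwise
non-crossing chords. -/
def IsOuterplane (n : ℕ) (G : SimpleGraph (ZMod n)) : Prop :=
  ∃ S : Set (Sym2 (ZMod n)), NonCrossingChords n S ∧
    G.edgeSet = {e | IsCycleEdge n e} ∪ S

/-- The multiset of vertex degrees of a graph on a finite vertex type. -/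
noncomputable def degMultiset {V : Type*} [Fintype V] (G : SimpleGraph V) : Multiset ℕ := by
  classical exact Finset.univ.val.map fun v => G.degree v

/-- The multiset of vertex degrees of a graph on `ZMod n` (junk value for `n = 0`). -/
noncomputable def degreeMultiset (n : ℕ) (G : SimpleGraph (ZMod n)) : Multiset ℕ :=
  if h : n = 0 then 0
  else by haveI : NeZero n := ⟨h⟩; exact degMultiset G

/-- `M` is outerplane-unigraphic on `n` vertices: there is an outerplane graph on
`n` vertices with degree multiset `M`, and any two such are isomorphic. -/
def OuterplaneUnigraphic (n : ℕ) (M : Multiset ℕ) : Prop :=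
  (∃ G : SimpleGraph (ZMod n), IsOuterplane n G ∧ degreeMultiset n G = M) ∧
  ∀ G G' : SimpleGraph (ZMod n), IsOuterplane n G → IsOuterplane n G' →
    degreeMultiset n G = M → degreeMultiset n G' = M → Nonempty (G ≃g G')

/-- A caterpillar: a connected acyclic graph (tree) in which all vertices of
degree at least two lie on a common path. -/
def IsCaterpillar {V : Type*} (G : SimpleGraph V) : Prop :=
  G.Connected ∧ G.IsAcyclic ∧
    ∃ (u w : V) (p : G.Walk u w), p.IsPath ∧
      ∀ v : V, (∃ a b : V, a ≠ b ∧ G.Adj v a ∧ G.Adj v b) → v ∈ p.support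

/-!
Each edge of a cycle of non-crossing chords cuts off an arc of the polygon containing no other
vertex of the cycle, and every arc cut off by a chord contains a chord-free vertex. So with three
chord-free vertices every cycle of the chord graph is a triangle whose sides separate them, and
there is at most one such triangle.

Suppose that there were fewer than `n - 3` chords. Then the nonzero chord degrees sum to at most
twice their number minus two, so they are the degrees of a forest that zigzags between two lines.
Bend the two lines into a cycle with an isolated vertex in the gap at the left end. The other two
isolated vertices either both go into the gap at the right end, where they are adjacent on the
cycle, or one of them is placed on one of the lines, so that no two of the three are adjacent.
Since the chord-free vertices are those of degree two, the two outerplane graphs are not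
isomorphic, contradicting unigraphicity.

Hence there are at least `n - 3` chords on the `n - 3` vertices that are not chord-free. This
forces a cycle, and as each cycle contains the same three edges, removing one of them leaves a
forest with at least `n - 4` edges, that is, a spanning tree.
-/

section CyclicOrder

variable {n : ℕ} [NeZero n] {a b c d v : ZMod n}

theorem val_sub_add_val (v a : ZMod n) :
    (v - a).val + a.val = v.val ∨ (v - a).val + a.val = v.val + n := by
  have hadd := ZMod.val_add (v - a) a
  rw [sub_add_cancel] at hadd
  have hlt := add_lt_add (v - a).val_lt a.val_lt
  rcases lt_or_ge ((v - a).val + a.val) n with hsmall | hlarge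
  · rw [Nat.mod_eq_of_lt hsmall] at hadd
    exact .inl hadd.symm
  · rw [Nat.mod_eq_sub_mod hlarge, Nat.mod_eq_of_lt (by omega)] at hadd
    omega

theorem between_iff_val : Between n a b v ↔ (a.val < v.val ∧ v.val < b.val) ∨
    (b.val < a.val ∧ (a.val < v.val ∨ v.val < b.val)) := by
  have := val_sub_add_val v a
  have := val_sub_add_val b a
  have := (v - a).val_lt
  have := (b - a).val_lt
  have := a.val_lt
  have := b.val_lt
  have := v.val_lt
  rw [Between]
  omega

theorem eq_iff_val_eq : a = b ↔ a.val = b.val :=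
  (ZMod.val_injective n).eq_iff.symm

theorem Between.ne_left (h : Between n a b v) : v ≠ a := by
  rw [between_iff_val] at h
  rw [ne_eq, eq_iff_val_eq]
  omega

theorem Between.ne_right (h : Between n a b v) : v ≠ b := by
  rw [between_iff_val] at h
  rw [ne_eq, eq_iff_val_eq]
  omega

theorem not_between_swap_iff (hab : a ≠ b) (hva : v ≠ a) (hvb : v ≠ b) :
    ¬ Between n b a v ↔ Between n a b v := by
  rw [ne_eq, eq_iff_val_eq] at hab hva hvb
  rw [between_iff_val, between_iff_val]
  omega

theorem between_add_one (hba : b ≠ a) (hb : b ≠ a + 1) : Between n a b (a + 1) := by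
  rw [← sub_ne_zero, ← ZMod.val_ne_zero] at hba
  have : Fact (1 < n) := ⟨by have := (b - a).val_lt; omega⟩
  have hsub : b - a ≠ 1 := fun h => hb (by rw [← h, add_sub_cancel])
  rw [ne_eq, eq_iff_val_eq, ZMod.val_one] at hsub
  rw [Between, add_sub_cancel_left, ZMod.val_one]
  omega

theorem Between.trans {x : ZMod n} (hcd : Between n a d c) (hd : d = b ∨ Between n a b d)
    (hx : Between n c d x) : Between n a b x := by
  simp only [between_iff_val, eq_iff_val_eq] at *
  omega

theorem Between.val_sub_lt (hcd : Between n a d c) (hd : d = b ∨ Between n a b d) :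
    (d - c).val < (b - a).val := by
  have := val_sub_add_val d c
  have := val_sub_add_val b a
  have := (d - c).val_lt
  have := (b - a).val_lt
  have := a.val_lt
  have := c.val_lt
  have := d.val_lt
  simp only [between_iff_val, eq_iff_val_eq] at *
  omega

theorem eq_of_between_of_not_between {a' b' x : ZMod n}
    (hx : Between n a b x) (hx' : Between n a' b' x)
    (ha' : ¬ Between n a b a') (hb' : ¬ Between n a b b')
    (ha : ¬ Between n a' b' a) (hb : ¬ Between n a' b' b) : a = a' ∧ b = b' := by
  simp only [between_iff_val, eq_iff_val_eq] at *
  omega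

end CyclicOrder

section NonCrossing

variable {n : ℕ} {S : Set (Sym2 (ZMod n))} {a b c d : ZMod n}

theorem NonCrossingChords.ne (hS : NonCrossingChords n S) (hab : s(a, b) ∈ S) : a ≠ b :=
  fun h => (hS.1 _ hab).1 (Sym2.mk_isDiag_iff.2 h)

theorem NonCrossingChords.ne_add_one (hS : NonCrossingChords n S) (hab : s(a, b) ∈ S) :
    b ≠ a + 1 :=
  fun h => (hS.1 _ hab).2 ⟨a, by rw [h]⟩

theorem NonCrossingChords.chordGraph_adj (hS : NonCrossingChords n S) :
    (chordGraph n S).Adj a b ↔ s(a, b) ∈ S := by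
  rw [chordGraph, SimpleGraph.fromEdgeSet_adj]
  exact ⟨And.left, fun h => ⟨h, hS.ne h⟩⟩

theorem NonCrossingChords.chordFree_iff (hS : NonCrossingChords n S) :
    ChordFree n S a ↔ a ∉ (chordGraph n S).support := by
  simp only [SimpleGraph.mem_support, hS.chordGraph_adj, not_exists]
  refine ⟨fun h b hab => h _ hab (Sym2.mem_mk_left a b), fun h e he ha => ?_⟩
  obtain ⟨b, rfl⟩ := Sym2.mem_iff_exists.1 ha
  exact h b he

variable [NeZero n]

theorem NonCrossingChords.not_between_swap (hS : NonCrossingChords n S)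
    (hab : s(a, b) ∈ S) (hcd : s(c, d) ∈ S) (hc : Between n a b c) : ¬ Between n b a d := by
  intro hd
  refine hS.2 _ hab _ hcd (fun heq => ?_) fun a' b' c' d' hab' hcd' => ?_
  · have hcab : c ∈ s(a, b) := heq ▸ Sym2.mem_mk_left c d
    exact (Sym2.mem_iff.1 hcab).elim hc.ne_left hc.ne_right
  · rw [between_iff_val] at hc hd
    rcases Sym2.eq_iff.1 hab' with ⟨rfl, rfl⟩ | ⟨rfl, rfl⟩ <;>
      rcases Sym2.eq_iff.1 hcd' with ⟨rfl, rfl⟩ | ⟨rfl, rfl⟩ <;>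
      refine (xor_iff_not_iff _ _).2 ?_ <;> simp only [between_iff_val] <;> omega

theorem NonCrossingChords.between_of_between (hS : NonCrossingChords n S)
    (hab : s(a, b) ∈ S) (hcd : s(c, d) ∈ S) (hc : Between n a b c) (hda : d ≠ a) (hdb : d ≠ b) :
    Between n a b d :=
  (not_between_swap_iff (hS.ne hab) hda hdb).1 (hS.not_between_swap hab hcd hc)

theorem NonCrossingChords.exists_chordFree_between (hS : NonCrossingChords n S)
    (hab : s(a, b) ∈ S) : ∃ x, ChordFree n S x ∧ Between n a b x := by
  induction hk : (b - a).val using Nat.strong_induction_on generalizing a b with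
  | _ k ih =>
  subst hk
  have hsucc := between_add_one (hS.ne hab).symm (hS.ne_add_one hab)
  by_cases hfree : ChordFree n S (a + 1)
  · exact ⟨a + 1, hfree, hsucc⟩
  simp only [ChordFree, not_forall, not_not] at hfree
  obtain ⟨e, he, hmem⟩ := hfree
  obtain ⟨y, rfl⟩ := Sym2.mem_iff_exists.1 hmem
  have hya : y ≠ a := fun h => hS.ne_add_one (Sym2.eq_swap ▸ he) (by rw [h])
  have hinner : Between n a y (a + 1) := between_add_one hya (hS.ne he).symm
  have hy : y = b ∨ Between n a b y :=
    or_iff_not_imp_left.2 (hS.between_of_between hab he hsucc hya)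
  obtain ⟨x, hx, hbetween⟩ := ih _ (hinner.val_sub_lt hy) he rfl
  exact ⟨x, hx, hinner.trans hy hbetween⟩

end NonCrossing

section Cycles

variable {V : Type*} {G : SimpleGraph V} {w a b x : V}

theorem exists_walk_mem_support_iff {c : G.Walk w w} (hc : c.IsCycle) (hab : s(a, b) ∈ c.edges) :
    ∃ (u v : V) (q : G.Walk u v), ∀ x, x ∈ q.support ↔ x ∈ c.support ∧ x ≠ a ∧ x ≠ b := by
  classical
  have ha : a ∈ c.support := c.fst_mem_support_of_mem_edges hab
  obtain ⟨c', hc', hsnd, hverts⟩ := (hc.rotate ha).exists_isCycle_snd_verts_eq (w := b)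
    (by rwa [SimpleGraph.Walk.adj_toSubgraph_iff_mem_edges, (c.rotate_edges _ ha).mem_iff])
  have hlen := hc'.three_le_length
  have htail : ¬ c'.tail.Nil := by
    rw [SimpleGraph.Walk.not_nil_iff_lt_length, SimpleGraph.Walk.length_tail]
    omega
  have htail' : ¬ c'.tail.tail.Nil := by
    rw [SimpleGraph.Walk.not_nil_iff_lt_length, SimpleGraph.Walk.length_tail,
      SimpleGraph.Walk.length_tail]
    omega
  refine ⟨_, _, c'.tail.tail.dropLast, fun x => ?_⟩
  have hsupp : c'.support = a :: b :: (c'.tail.tail.dropLast.support ++ [a]) := by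
    rw [SimpleGraph.Walk.support_dropLast_concat htail', ← hsnd,
      SimpleGraph.Walk.cons_support_tail htail, SimpleGraph.Walk.cons_support_tail hc'.not_nil]
  have hmem : x ∈ c.support ↔ x ∈ c'.support := by
    rw [← c'.mem_verts_toSubgraph, hverts, SimpleGraph.Walk.mem_verts_toSubgraph,
      SimpleGraph.Walk.mem_support_rotate_iff]
  have hnodup := hc'.support_nodup
  rw [hsupp] at hnodup
  rw [hmem, hsupp]
  grind

theorem exists_triangle_of_length_eq_three {c : G.Walk w w} (hc : c.length = 3) :
    ∃ x y z, G.Adj x y ∧ G.Adj y z ∧ G.Adj z x ∧ ∀ v, v ∈ c.support ↔ v = x ∨ v = y ∨ v = z := by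
  match c, hc with
  | .cons hxy (.cons hyz (.cons hzx .nil)), _ =>
    exact ⟨_, _, _, hxy, hyz, hzx, fun v => by simp; tauto⟩

end Cycles

section ChordCycles

variable {n : ℕ} [NeZero n] {S : Set (Sym2 (ZMod n))} {a b u v w : ZMod n}

theorem NonCrossingChords.between_iff_of_mem_support (hS : NonCrossingChords n S)
    (hab : s(a, b) ∈ S) {q : (chordGraph n S).Walk u v} (hq : ∀ y ∈ q.support, y ≠ a ∧ y ≠ b)
    {x : ZMod n} (hx : x ∈ q.support) : Between n a b x ↔ Between n a b u := by
  induction q with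
  | nil => rw [SimpleGraph.Walk.mem_support_nil_iff.1 hx]
  | @cons u z v huz q ih =>
    rw [SimpleGraph.Walk.support_cons, List.forall_mem_cons] at hq
    rw [hS.chordGraph_adj] at huz
    rw [SimpleGraph.Walk.support_cons, List.mem_cons] at hx
    have hz := hq.2 z q.start_mem_support
    have hzu : Between n a b z ↔ Between n a b u :=
      ⟨fun h => hS.between_of_between hab (Sym2.eq_swap ▸ huz) h hq.1.1 hq.1.2,
        fun h => hS.between_of_between hab huz h hz.1 hz.2⟩
    rcases hx with rfl | hx
    · rfl
    · exact (ih hq.2 hx).trans hzu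

theorem NonCrossingChords.exists_orientation_of_isCycle (hS : NonCrossingChords n S)
    {c : (chordGraph n S).Walk w w} (hc : c.IsCycle) {e : Sym2 (ZMod n)} (he : e ∈ c.edges) :
    ∃ a b, e = s(a, b) ∧ ∀ v ∈ c.support, ¬ Between n a b v := by
  induction e with | _ a b
  have hab : s(a, b) ∈ S := hS.chordGraph_adj.1 (c.adj_of_mem_edges he)
  obtain ⟨u, z, q, hq⟩ := exists_walk_mem_support_iff hc he
  have hside {x : ZMod n} (hx : x ∈ q.support) : Between n a b x ↔ Between n a b u :=
    hS.between_iff_of_mem_support hab (fun y hy => ((hq y).1 hy).2) hx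
  by_cases hu : Between n a b u
  · refine ⟨b, a, Sym2.eq_swap, fun v hv hbetween => ?_⟩
    have hvq := (hq v).2 ⟨hv, hbetween.ne_right, hbetween.ne_left⟩
    exact (not_between_swap_iff (hS.ne hab) hbetween.ne_right hbetween.ne_left).2
      ((hside hvq).2 hu) hbetween
  · refine ⟨a, b, rfl, fun v hv hbetween => hu ?_⟩
    exact (hside ((hq v).2 ⟨hv, hbetween.ne_left, hbetween.ne_right⟩)).1 hbetween

-- Distinct edges of a cycle cut off disjoint arcs, and each arc contains a chord-free vertex.
theorem NonCrossingChords.length_le_ncard_chordFree (hS : NonCrossingChords n S)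
    {c : (chordGraph n S).Walk w w} (hc : c.IsCycle) :
    c.length ≤ {v | ChordFree n S v}.ncard := by
  classical
  have harc (e : Sym2 (ZMod n)) (he : e ∈ c.edges) : ∃ a b x, e = s(a, b) ∧
      ChordFree n S x ∧ Between n a b x ∧ ∀ v ∈ c.support, ¬ Between n a b v := by
    obtain ⟨a, b, rfl, hside⟩ := hS.exists_orientation_of_isCycle hc he
    obtain ⟨x, hx, hbetween⟩ :=
      hS.exists_chordFree_between (hS.chordGraph_adj.1 (c.adj_of_mem_edges he))
    exact ⟨a, b, x, rfl, hx, hbetween, hside⟩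
  choose! a b x hends hfree hbetween hside using harc
  have hleft {e} (he : e ∈ c.edges) : a e ∈ c.support :=
    c.fst_mem_support_of_mem_edges (hends e he ▸ he)
  have hright {e} (he : e ∈ c.edges) : b e ∈ c.support :=
    c.snd_mem_support_of_mem_edges (hends e he ▸ he)
  have hinj : Set.InjOn x c.edges.toFinset := fun e he f hf hef => by
    rw [SetLike.mem_coe, List.mem_toFinset] at he hf
    obtain ⟨haa, hbb⟩ := eq_of_between_of_not_between (hbetween e he) (hef ▸ hbetween f hf)
      (hside e he _ (hleft hf)) (hside e he _ (hright hf))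
      (hside f hf _ (hleft he)) (hside f hf _ (hright he))
    rw [hends e he, hends f hf, haa, hbb]
  rw [← c.length_edges, ← List.toFinset_card_of_nodup hc.edges_nodup, ← Set.ncard_coe_finset]
  exact Set.ncard_le_ncard_of_injOn x (fun e he => hfree e (by simpa using he)) hinj

end ChordCycles

section ChordTriangles

/-- `a`, `b`, `c` occur in this cyclic order and span a triangle of chords of `S`, and `p`, `q`,
`r` are chord-free vertices lying beyond its sides `ab`, `bc`, `ca` respectively. -/
structure SeparatedTriangle {n : ℕ} (S : Set (Sym2 (ZMod n))) (a b c p q r : ZMod n) : Prop where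
  cyclic : Between n a c b
  mem₁ : s(a, b) ∈ S
  mem₂ : s(b, c) ∈ S
  mem₃ : s(c, a) ∈ S
  chordFree₁ : ChordFree n S p
  chordFree₂ : ChordFree n S q
  chordFree₃ : ChordFree n S r
  between₁ : Between n a b p
  between₂ : Between n b c q
  between₃ : Between n c a r

variable {n : ℕ} [NeZero n] {S : Set (Sym2 (ZMod n))} {a b c a' b' c' p q r p' q' r' : ZMod n}

theorem Between.rotate (h : Between n a c b) : Between n b a c := by
  rw [between_iff_val] at *
  omega

theorem between_or_between_swap (hab : a ≠ b) (hbc : b ≠ c) (hca : c ≠ a) :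
    Between n a c b ∨ Between n c a b := by
  rw [ne_eq, eq_iff_val_eq] at hab hbc hca
  simp only [between_iff_val]
  omega

theorem NonCrossingChords.exists_separatedTriangle (hS : NonCrossingChords n S)
    (hab : s(a, b) ∈ S) (hbc : s(b, c) ∈ S) (hca : s(c, a) ∈ S) :
    ∃ p q r, SeparatedTriangle S a b c p q r ∨ SeparatedTriangle S c b a p q r := by
  rcases between_or_between_swap (hS.ne hab) (hS.ne hbc) (hS.ne hca) with hcyc | hcyc
  · obtain ⟨p, hp, hpab⟩ := hS.exists_chordFree_between hab
    obtain ⟨q, hq, hqbc⟩ := hS.exists_chordFree_between hbc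
    obtain ⟨r, hr, hrca⟩ := hS.exists_chordFree_between hca
    exact ⟨p, q, r, .inl ⟨hcyc, hab, hbc, hca, hp, hq, hr, hpab, hqbc, hrca⟩⟩
  · rw [Sym2.eq_swap] at hab hbc hca
    obtain ⟨p, hp, hpcb⟩ := hS.exists_chordFree_between hbc
    obtain ⟨q, hq, hqba⟩ := hS.exists_chordFree_between hab
    obtain ⟨r, hr, hrac⟩ := hS.exists_chordFree_between hca
    exact ⟨p, q, r, .inr ⟨hcyc, hbc, hab, hca, hp, hq, hr, hpcb, hqba, hrac⟩⟩

namespace SeparatedTriangle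

theorem rotate (h : SeparatedTriangle S a b c p q r) : SeparatedTriangle S b c a q r p :=
  ⟨h.cyclic.rotate, h.mem₂, h.mem₃, h.mem₁, h.chordFree₂, h.chordFree₃, h.chordFree₁,
    h.between₂, h.between₃, h.between₁⟩

theorem between_separators (h : SeparatedTriangle S a b c p q r) : Between n p r q := by
  obtain ⟨h, -, -, -, -, -, -, hp, hq, hr⟩ := h
  simp only [between_iff_val] at *
  omega

theorem between_vertex (h : SeparatedTriangle S a b c p q r) : Between n p q b := by
  obtain ⟨h, -, -, -, -, -, -, hp, hq, hr⟩ := h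
  simp only [between_iff_val] at *
  omega

theorem between_opposite (h : SeparatedTriangle S a b c p q r) {x : ZMod n}
    (hx : Between n q r x) : Between n b a x := by
  obtain ⟨h, -, -, -, -, -, -, hp, hq, hr⟩ := h
  simp only [between_iff_val] at *
  omega

theorem not_between_vertex (hS : NonCrossingChords n S) (h : SeparatedTriangle S a b c p q r)
    (h' : SeparatedTriangle S a' b' c' p q r) : ¬ Between n a p a' := fun hlt =>
  hS.not_between_swap h.mem₁ (Sym2.eq_swap ▸ h'.mem₃)
    (by
      have := h.between₁
      rw [between_iff_val] at *
      omega)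
    (h.between_opposite h'.rotate.between_vertex)

theorem vertex_eq (hS : NonCrossingChords n S) (h : SeparatedTriangle S a b c p q r)
    (h' : SeparatedTriangle S a' b' c' p q r) : a = a' := by
  have hlt := not_between_vertex hS h h'
  have hgt := not_between_vertex hS h' h
  have ha := h.rotate.rotate.between_vertex
  have ha' := h'.rotate.rotate.between_vertex
  simp only [between_iff_val, eq_iff_val_eq] at *
  omega

theorem vertices_eq (hS : NonCrossingChords n S) (h : SeparatedTriangle S a b c p q r)
    (h' : SeparatedTriangle S a' b' c' p q r) : a = a' ∧ b = b' ∧ c = c' :=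
  ⟨vertex_eq hS h h', vertex_eq hS h.rotate h'.rotate,
    vertex_eq hS h.rotate.rotate h'.rotate.rotate⟩

end SeparatedTriangle

theorem eq_or_rotate_of_between (h : Between n p r q) (h' : Between n p' r' q')
    (hp : p' = p ∨ p' = q ∨ p' = r) (hq : q' = p ∨ q' = q ∨ q' = r)
    (hr : r' = p ∨ r' = q ∨ r' = r) :
    (p' = p ∧ q' = q ∧ r' = r) ∨ (p' = q ∧ q' = r ∧ r' = p) ∨ (p' = r ∧ q' = p ∧ r' = q) := by
  simp only [between_iff_val, eq_iff_val_eq] at *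
  omega

theorem SeparatedTriangle.chordFree_iff (h : SeparatedTriangle S a b c p q r)
    (hthree : {v | ChordFree n S v}.ncard = 3) {v : ZMod n} :
    ChordFree n S v ↔ v = p ∨ v = q ∨ v = r := by
  have hpqr := h.between_separators
  have hsub : {p, q, r} ⊆ {v | ChordFree n S v} := by
    rintro v (rfl | rfl | rfl)
    exacts [h.chordFree₁, h.chordFree₂, h.chordFree₃]
  have hpr : p ≠ r := fun hpr => by
    rw [between_iff_val, hpr] at hpqr
    omega
  have hcard : ({p, q, r} : Set (ZMod n)).ncard = 3 :=
    Set.ncard_eq_three.2 ⟨p, q, r, hpqr.ne_left.symm, hpr, hpqr.ne_right, rfl⟩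
  have heq := Set.eq_of_subset_of_ncard_le hsub (by rw [hthree, hcard])
  exact (Set.ext_iff.1 heq v).symm

theorem SeparatedTriangle.insert_eq (hS : NonCrossingChords n S)
    (hthree : {v | ChordFree n S v}.ncard = 3) (h : SeparatedTriangle S a b c p q r)
    (h' : SeparatedTriangle S a' b' c' p' q' r') : ({a, b, c} : Set (ZMod n)) = {a', b', c'} := by
  rcases eq_or_rotate_of_between h.between_separators h'.between_separators
      ((h.chordFree_iff hthree).1 h'.chordFree₁) ((h.chordFree_iff hthree).1 h'.chordFree₂)
      ((h.chordFree_iff hthree).1 h'.chordFree₃)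
    with ⟨rfl, rfl, rfl⟩ | ⟨rfl, rfl, rfl⟩ | ⟨rfl, rfl, rfl⟩
  · obtain ⟨rfl, rfl, rfl⟩ := vertices_eq hS h h'
    rfl
  · obtain ⟨rfl, rfl, rfl⟩ := vertices_eq hS h.rotate h'
    grind
  · obtain ⟨rfl, rfl, rfl⟩ := vertices_eq hS h.rotate.rotate h'
    grind

theorem NonCrossingChords.exists_separatedTriangle_of_length (hS : NonCrossingChords n S)
    {w : ZMod n} {t : (chordGraph n S).Walk w w} (ht : t.length = 3) :
    ∃ a b c p q r, SeparatedTriangle S a b c p q r ∧ {v | v ∈ t.support} = {a, b, c} := by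
  obtain ⟨a, b, c, hab, hbc, hca, hsupp⟩ := exists_triangle_of_length_eq_three ht
  rw [hS.chordGraph_adj] at hab hbc hca
  obtain ⟨p, q, r, h | h⟩ := hS.exists_separatedTriangle hab hbc hca
  · exact ⟨a, b, c, p, q, r, h, Set.ext hsupp⟩
  · exact ⟨c, b, a, p, q, r, h, by grind⟩

theorem NonCrossingChords.mem_support_iff_of_length (hS : NonCrossingChords n S)
    (hthree : {v | ChordFree n S v}.ncard = 3) {v w : ZMod n}
    {t : (chordGraph n S).Walk v v} {t' : (chordGraph n S).Walk w w} (ht : t.length = 3)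
    (ht' : t'.length = 3) (x : ZMod n) : x ∈ t.support ↔ x ∈ t'.support := by
  obtain ⟨a, b, c, p, q, r, h, hsupp⟩ := hS.exists_separatedTriangle_of_length ht
  obtain ⟨a', b', c', p', q', r', h', hsupp'⟩ := hS.exists_separatedTriangle_of_length ht'
  exact Set.ext_iff.1 (hsupp.trans ((h.insert_eq hS hthree h').trans hsupp'.symm)) x

end ChordTriangles

section Forests

variable {V : Type*} {G : SimpleGraph V}

theorem mem_edges_of_length_eq_three {u v w : V} {c : G.Walk w w} (hc : c.length = 3)
    (hu : u ∈ c.support) (hv : v ∈ c.support) (huv : u ≠ v) : s(u, v) ∈ c.edges := by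
  match c, hc with
  | .cons _ (.cons _ (.cons _ .nil)), _ =>
    simp only [SimpleGraph.Walk.support_cons, SimpleGraph.Walk.support_nil,
      SimpleGraph.Walk.edges_cons, SimpleGraph.Walk.edges_nil, List.mem_cons, List.not_mem_nil,
      or_false, Sym2.eq_iff] at hu hv ⊢
    grind

theorem exists_isTree_ge_of_isAcyclic [Nonempty V] (hG : G.IsAcyclic) : ∃ T, G ≤ T ∧ T.IsTree :=
  have ⟨T, hGT, _, hT⟩ := SimpleGraph.connected_top.exists_isTree_le_of_le_of_isAcyclic le_top hG
  ⟨T, hGT, hT⟩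

variable [Finite V]

theorem ncard_edgeSet_add_one_of_isTree (hG : G.IsTree) : G.edgeSet.ncard + 1 = Nat.card V :=
  (SimpleGraph.isTree_iff_connected_and_card.1 hG).2

theorem ncard_edgeSet_lt_of_isAcyclic [Nonempty V] (hG : G.IsAcyclic) :
    G.edgeSet.ncard < Nat.card V := by
  obtain ⟨T, hGT, hT⟩ := exists_isTree_ge_of_isAcyclic hG
  have := Set.ncard_le_ncard (SimpleGraph.edgeSet_mono hGT)
  have := ncard_edgeSet_add_one_of_isTree hT
  omega

theorem connected_of_isAcyclic_of_card_le [Nonempty V] (hG : G.IsAcyclic)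
    (hcard : Nat.card V ≤ G.edgeSet.ncard + 1) : G.Connected := by
  obtain ⟨T, hGT, hT⟩ := exists_isTree_ge_of_isAcyclic hG
  have hT_card := ncard_edgeSet_add_one_of_isTree hT
  have heq := Set.eq_of_subset_of_ncard_le (SimpleGraph.edgeSet_mono hGT) (by omega)
  rw [SimpleGraph.edgeSet_inj.1 heq]
  exact hT.connected

theorem connected_of_forall_isCycle_mem_edges {e : Sym2 V} (he : e ∈ G.edgeSet)
    (hcyc : ∀ (v : V) (c : G.Walk v v), c.IsCycle → e ∈ c.edges)
    (hcard : Nat.card V ≤ G.edgeSet.ncard) : G.Connected := by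
  have : Nonempty V := ⟨e.out.1⟩
  have hle : G.deleteEdges {e} ≤ G := G.deleteEdges_le {e}
  have hacyclic : (G.deleteEdges {e}).IsAcyclic := fun v c hc => by
    have hmem := hcyc v _ (hc.mapLe hle)
    rw [SimpleGraph.Walk.edges_mapLe_eq_edges] at hmem
    have hmem' := c.edges_subset_edgeSet hmem
    rw [SimpleGraph.edgeSet_deleteEdges] at hmem'
    exact hmem'.2 rfl
  refine (connected_of_isAcyclic_of_card_le hacyclic ?_).mono hle
  rwa [SimpleGraph.edgeSet_deleteEdges, Set.ncard_sdiff_singleton_add_one he]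

theorem ncard_edgeSet_induce_support : (G.induce G.support).edgeSet.ncard = G.edgeSet.ncard := by
  classical
  have := Fintype.ofFinite V
  rw [← SimpleGraph.coe_edgeFinset, ← SimpleGraph.coe_edgeFinset, Set.ncard_coe_finset,
    Set.ncard_coe_finset]
  exact SimpleGraph.card_edgeFinset_induce_support

end Forests

section UniqueTriangle

variable {n : ℕ} [NeZero n] {S : Set (Sym2 (ZMod n))}

theorem NonCrossingChords.length_eq_three (hS : NonCrossingChords n S)
    (hthree : {v | ChordFree n S v}.ncard = 3) {w : ZMod n} {c : (chordGraph n S).Walk w w}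
    (hc : c.IsCycle) : c.length = 3 :=
  le_antisymm (hthree ▸ hS.length_le_ncard_chordFree hc) hc.three_le_length

theorem NonCrossingChords.card_support_add_three (hS : NonCrossingChords n S)
    (hthree : {v | ChordFree n S v}.ncard = 3) : Nat.card (chordGraph n S).support + 3 = n := by
  have hcompl : {v | ChordFree n S v} = (chordGraph n S).supportᶜ :=
    Set.ext fun _ => hS.chordFree_iff
  rw [← hthree, hcompl, Nat.card_coe_set_eq, Set.ncard_add_ncard_compl, Nat.card_zmod]

theorem NonCrossingChords.exists_unique_triangle (hS : NonCrossingChords n S)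
    (hthree : {v | ChordFree n S v}.ncard = 3) (hn : 3 < n)
    (hcard : n ≤ (chordGraph n S).edgeSet.ncard + 3) :
    (∃ (v : ZMod n) (c : (chordGraph n S).Walk v v), c.IsCycle ∧ c.length = 3 ∧
        ∀ (w : ZMod n) (d : (chordGraph n S).Walk w w), d.IsCycle →
          ∀ x : ZMod n, x ∈ d.support ↔ x ∈ c.support) ∧
      ((chordGraph n S).induce (chordGraph n S).support).Connected := by
  set H := chordGraph n S
  set ι := SimpleGraph.Embedding.induce (G := H) H.support
  have hι : Function.Injective ι.toHom := ι.injective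
  have hsupp : Nat.card H.support + 3 = n := hS.card_support_add_three hthree
  have hedges := ncard_edgeSet_induce_support (G := H)
  have : Nonempty H.support := (Nat.card_pos_iff.1 (by omega)).1
  obtain ⟨v, c, hc⟩ : ∃ v, ∃ c : (H.induce H.support).Walk v v, c.IsCycle := by
    have hcyclic : ¬ (H.induce H.support).IsAcyclic := fun h => by
      have := ncard_edgeSet_lt_of_isAcyclic h
      omega
    simpa [SimpleGraph.IsAcyclic] using hcyclic
  have hunique {w : ZMod n} {d : H.Walk w w} (hd : d.IsCycle) :
      ∀ x, x ∈ d.support ↔ x ∈ (c.map ι.toHom).support :=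
    hS.mem_support_iff_of_length hthree (hS.length_eq_three hthree hd)
      (hS.length_eq_three hthree (hc.map hι))
  refine ⟨⟨_, _, hc.map hι, hS.length_eq_three hthree (hc.map hι), fun _ _ => hunique⟩, ?_⟩
  have hadj : (H.induce H.support).Adj v c.snd := c.adj_snd hc.not_nil
  refine connected_of_forall_isCycle_mem_edges (e := s(v, c.snd)) hadj (fun w d hd => ?_) (by omega)
  have hmem {x : H.support} (hx : x ∈ c.support) : x ∈ d.support := by
    have hx' := (hunique (hd.map hι) (ι.toHom x)).2
      (by rw [SimpleGraph.Walk.support_map]; exact List.mem_map_of_mem hx)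
    rwa [SimpleGraph.Walk.support_map, List.mem_map_of_injective hι] at hx'
  have hlength : d.length = 3 := by simpa using hS.length_eq_three hthree (hd.map hι)
  exact mem_edges_of_length_eq_three hlength (hmem c.start_mem_support)
    (hmem (c.getVert_mem_support 1)) hadj.ne

end UniqueTriangle

section Degrees

section General

variable {V : Type*} [Fintype V] (G : SimpleGraph V)

theorem degMultiset_eq_map_ncard :
    degMultiset G = Finset.univ.val.map fun v => (G.neighborSet v).ncard := by
  classical
  exact Multiset.map_congr rfl fun v _ => (Set.ncard_eq_toFinset_card' _).symm

theorem card_degMultiset : (degMultiset G).card = Fintype.card V := by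
  rw [degMultiset_eq_map_ncard, Multiset.card_map, Finset.card_val, Finset.card_univ]

theorem sum_degMultiset : (degMultiset G).sum = 2 * G.edgeSet.ncard := by
  classical
  rw [Set.ncard_eq_toFinset_card']
  exact G.sum_degrees_eq_twice_card_edges

theorem count_zero_degMultiset : (degMultiset G).count 0 = G.supportᶜ.ncard := by
  classical
  rw [degMultiset_eq_map_ncard, Multiset.count_map, ← Finset.filter_val, Finset.card_val,
    ← Set.ncard_coe_finset]
  congr 1
  ext v
  simp [SimpleGraph.mem_support, Set.ncard_eq_zero (Set.toFinite _), Set.eq_empty_iff_forall_notMem,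
    eq_comm (a := 0)]

end General

variable {n : ℕ} {G : SimpleGraph (ZMod n)} {S : Set (Sym2 (ZMod n))} {v w : ZMod n}

theorem natCast_ne_zero_of_lt {k : ℕ} (hpos : 0 < k) (hk : k < n) : (k : ZMod n) ≠ 0 :=
  fun h => (Nat.le_of_dvd hpos ((ZMod.natCast_eq_zero_iff k n).1 h)).not_gt hk

theorem isCycleEdge_mk_iff : IsCycleEdge n s(v, w) ↔ w = v - 1 ∨ w = v + 1 := by
  refine ⟨?_, ?_⟩
  · rintro ⟨i, hi⟩
    rcases Sym2.eq_iff.1 hi with ⟨rfl, rfl⟩ | ⟨rfl, rfl⟩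
    · exact .inr rfl
    · exact .inl (add_sub_cancel_right _ _).symm
  · rintro (rfl | rfl)
    · exact ⟨v - 1, by rw [sub_add_cancel, Sym2.eq_swap]⟩
    · exact ⟨v, rfl⟩

variable [NeZero n]

theorem degreeMultiset_eq_degMultiset (G : SimpleGraph (ZMod n)) :
    degreeMultiset n G = degMultiset G :=
  dif_neg (NeZero.ne n)

theorem ncard_neighborSet_eq_add_two (hn : 3 ≤ n) (hS : NonCrossingChords n S)
    (hES : G.edgeSet = {e | IsCycleEdge n e} ∪ S) (v : ZMod n) :
    (G.neighborSet v).ncard = ((chordGraph n S).neighborSet v).ncard + 2 := by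
  have hunion : G.neighborSet v = (chordGraph n S).neighborSet v ∪ {v - 1, v + 1} := by
    ext w
    rw [SimpleGraph.mem_neighborSet, ← SimpleGraph.mem_edgeSet, hES, Set.union_comm, Set.mem_union,
      Set.mem_union, SimpleGraph.mem_neighborSet, hS.chordGraph_adj, Set.mem_ofPred_eq,
      isCycleEdge_mk_iff, Set.mem_insert_iff, Set.mem_singleton_iff]
  have hdisjoint : Disjoint ((chordGraph n S).neighborSet v) {v - 1, v + 1} :=
    Set.disjoint_left.2 fun w hw hcycle =>
      (hS.1 _ (hS.chordGraph_adj.1 hw)).2 (isCycleEdge_mk_iff.2 hcycle)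
  have hne : v - 1 ≠ v + 1 := fun h => by
    have htwo : ((2 : ℕ) : ZMod n) = 0 := by push_cast; linear_combination -h
    exact natCast_ne_zero_of_lt two_pos hn htwo
  rw [hunion, Set.ncard_union_eq hdisjoint, Set.ncard_pair hne]

theorem degMultiset_eq_map_add_two (hn : 3 ≤ n) (hS : NonCrossingChords n S)
    (hES : G.edgeSet = {e | IsCycleEdge n e} ∪ S) :
    degMultiset G = (degMultiset (chordGraph n S)).map (· + 2) := by
  rw [degMultiset_eq_map_ncard, degMultiset_eq_map_ncard, Multiset.map_map]
  exact Multiset.map_congr rfl fun v _ => ncard_neighborSet_eq_add_two hn hS hES v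

theorem NonCrossingChords.count_zero_degMultiset (hS : NonCrossingChords n S) :
    (degMultiset (chordGraph n S)).count 0 = {v | ChordFree n S v}.ncard := by
  rw [_root_.count_zero_degMultiset]
  congr 1
  ext v
  exact hS.chordFree_iff.symm

end Degrees

section Zigzag

/-- Degree data of a zigzag: a forest drawn without crossings between a top and a bottom line,
built from left to right starting with one edge. In `Zigzag C x y` the current last vertices on
the two lines have degrees `x` and `y`, and `C` collects the degrees of all earlier vertices.
Degree `0` is allowed, since isolated vertices serve to realise prescribed zero degrees. -/
inductive Zigzag : Multiset ℕ → ℕ → ℕ → Prop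
  | start : Zigzag 0 1 1
  | swap {C : Multiset ℕ} {x y : ℕ} : Zigzag C x y → Zigzag C y x
  | close {C : Multiset ℕ} {x y : ℕ} : Zigzag C x y → Zigzag (x ::ₘ C) 0 y
  | edge {C : Multiset ℕ} {y : ℕ} : Zigzag C 0 y → Zigzag C 1 (y + 1)

namespace Zigzag

variable {C D : Multiset ℕ} {x y : ℕ}

theorem eq_zero_or_cons_zero (h : Zigzag C x y) : C = 0 ∨ Zigzag (0 ::ₘ C) x y := by
  induction h with
  | start => exact .inl rfl
  | swap _ ih => exact ih.imp_right swap
  | close h _ => exact .inr h.close.close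
  | edge _ ih => exact ih.imp_right edge

theorem attach_leaves (h : Zigzag C 1 y) (k : ℕ) :
    Zigzag (C + Multiset.replicate k 1) 1 (y + k) := by
  induction k with
  | zero => simpa using h
  | succ k ih =>
    rw [Multiset.replicate_succ, Multiset.add_cons, ← add_assoc]
    exact ih.close.edge

theorem exists_of_two_le (hD : ∀ d ∈ D, 2 ≤ d) :
    ∃ C y t, Zigzag C 1 y ∧ 1 ::ₘ y ::ₘ C = D + Multiset.replicate t 1 ∧
      D.sum + 2 = 2 * D.card + t := by
  induction D using Multiset.induction_on with
  | empty => exact ⟨0, 1, 2, start, rfl, rfl⟩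
  | cons d D ih =>
    rw [Multiset.forall_mem_cons] at hD
    obtain ⟨C, y, t, hzigzag, hmultiset, hsum⟩ := ih hD.2
    obtain ⟨k, rfl⟩ := Nat.exists_eq_add_of_le hD.1
    refine ⟨_, _, t + k, hzigzag.swap.close.edge.attach_leaves k, ?_, ?_⟩
    · rw [Multiset.replicate_add, ← add_assoc, Multiset.cons_add (2 + k), ← hmultiset,
        Multiset.cons_swap 1]
      simp only [Multiset.cons_add]
    · rw [Multiset.sum_cons, Multiset.card_cons]
      omega

theorem add_edges (h : Zigzag C x y) (e : ℕ) : ∃ C' x' y', Zigzag C' x' y' ∧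
    x' ::ₘ y' ::ₘ C' = x ::ₘ y ::ₘ C + Multiset.replicate (2 * e) 1 := by
  induction e with
  | zero => exact ⟨C, x, y, h, by simp⟩
  | succ e ih =>
    obtain ⟨C', x', y', hzigzag, hmultiset⟩ := ih
    refine ⟨y' ::ₘ x' ::ₘ C', 1, 1, hzigzag.close.swap.close.edge, ?_⟩
    rw [Multiset.cons_swap y', hmultiset, Nat.mul_succ, Multiset.replicate_add, ← add_assoc,
      Multiset.replicate_succ, Multiset.replicate_one, Multiset.add_cons, add_comm _ {1},
      Multiset.singleton_add]

-- Any multiset of positive degrees with the sum of a forest is realised: the entries `≥ 2` form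
-- a caterpillar together with the right number of leaves, and the remaining ones are paired up.
theorem exists_of_sum_le (hpos : ∀ d ∈ D, 0 < d) (heven : Even D.sum)
    (hsum : D.sum + 2 ≤ 2 * D.card) : ∃ C x y, Zigzag C x y ∧ x ::ₘ y ::ₘ C = D := by
  obtain ⟨B, s, hB, rfl⟩ : ∃ B s, (∀ d ∈ B, 2 ≤ d) ∧ D = B + Multiset.replicate s 1 := by
    refine ⟨D.filter (¬ 1 = ·), D.count 1, fun d hd => ?_, ?_⟩
    · have := hpos d (Multiset.mem_of_mem_filter hd)
      have := Multiset.of_mem_filter hd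
      omega
    · rw [← Multiset.filter_eq, add_comm, Multiset.filter_add_not]
  obtain ⟨C, y, t, hzigzag, hmultiset, ht⟩ := exists_of_two_le hB
  simp only [Multiset.sum_add, Multiset.sum_replicate, Multiset.card_add,
    Multiset.card_replicate, smul_eq_mul, mul_one] at heven hsum
  obtain ⟨m, hm⟩ := heven
  obtain ⟨e, rfl⟩ : ∃ e, s = t + 2 * e := ⟨(s - t) / 2, by omega⟩
  obtain ⟨C', x', y', hzigzag', hmultiset'⟩ := hzigzag.add_edges e
  exact ⟨C', x', y', hzigzag', by rw [hmultiset', hmultiset, Multiset.replicate_add, add_assoc]⟩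

end Zigzag

end Zigzag

section Staircase

/-- The number of points of `E` in row `i`, i.e. the degree of the `i`-th top vertex. -/
def rowCard (E : Finset (ℕ × ℕ)) (i : ℕ) : ℕ := (E.filter (·.1 = i)).card

/-- The number of points of `E` in column `j`, i.e. the degree of the `j`-th bottom vertex. -/
def colCard (E : Finset (ℕ × ℕ)) (j : ℕ) : ℕ := (E.filter (·.2 = j)).card

/-- A drawing of a zigzag with degree data `C`, `x`, `y`: a point `(i, j)` of `E` is an edge from
the `i`-th top vertex to the `j`-th bottom vertex, the last vertices on the two lines are `p` and
`q`, and two edges do not cross exactly when they are comparable in the product order. -/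
structure Staircase (E : Finset (ℕ × ℕ)) (p q : ℕ) (C : Multiset ℕ) (x y : ℕ) : Prop where
  fst_le : ∀ e ∈ E, e.1 ≤ p
  snd_le : ∀ e ∈ E, e.2 ≤ q
  isChain : IsChain (· ≤ ·) (E : Set (ℕ × ℕ))
  zero_mem : (0, 0) ∈ E
  rowCard_last : rowCard E p = x
  colCard_last : colCard E q = y
  closed : (Multiset.range p).map (rowCard E) + (Multiset.range q).map (colCard E) = C

variable {E : Finset (ℕ × ℕ)} {p q i j : ℕ} {C : Multiset ℕ} {x y : ℕ}

theorem rowCard_pos (h : (i, j) ∈ E) : 0 < rowCard E i :=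
  Finset.card_pos.2 ⟨(i, j), Finset.mem_filter.2 ⟨h, rfl⟩⟩

theorem colCard_pos (h : (i, j) ∈ E) : 0 < colCard E j :=
  Finset.card_pos.2 ⟨(i, j), Finset.mem_filter.2 ⟨h, rfl⟩⟩

theorem rowCard_eq_zero (h : ∀ e ∈ E, e.1 ≠ i) : rowCard E i = 0 :=
  Finset.card_eq_zero.2 (Finset.filter_eq_empty_iff.2 h)

theorem rowCard_insert (h : (i, j) ∉ E) (k : ℕ) :
    rowCard (insert (i, j) E) k = rowCard E k + if i = k then 1 else 0 := by
  rw [rowCard, rowCard, Finset.filter_insert]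
  split
  · exact Finset.card_insert_of_notMem fun hmem => h (Finset.mem_of_mem_filter _ hmem)
  · rfl

theorem colCard_insert (h : (i, j) ∉ E) (k : ℕ) :
    colCard (insert (i, j) E) k = colCard E k + if j = k then 1 else 0 := by
  rw [colCard, colCard, Finset.filter_insert]
  split
  · exact Finset.card_insert_of_notMem fun hmem => h (Finset.mem_of_mem_filter _ hmem)
  · rfl

theorem rowCard_map_prodComm (E : Finset (ℕ × ℕ)) :
    rowCard (E.map (Equiv.prodComm ℕ ℕ).toEmbedding) = colCard E := by
  ext i
  rw [rowCard, Finset.filter_map, Finset.card_map]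
  rfl

theorem colCard_map_prodComm (E : Finset (ℕ × ℕ)) :
    colCard (E.map (Equiv.prodComm ℕ ℕ).toEmbedding) = rowCard E := by
  ext i
  rw [colCard, Finset.filter_map, Finset.card_map]
  rfl

namespace Staircase

theorem card_eq (h : Staircase E p q C x y) : C.card = p + q := by
  rw [← h.closed, Multiset.card_add, Multiset.card_map, Multiset.card_map, Multiset.card_range,
    Multiset.card_range]

theorem start : Staircase {(0, 0)} 0 0 0 1 1 where
  fst_le := by simp
  snd_le := by simp
  isChain := by simp
  zero_mem := Finset.mem_singleton_self _
  rowCard_last := rfl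
  colCard_last := rfl
  closed := rfl

theorem swap (h : Staircase E p q C x y) :
    Staircase (E.map (Equiv.prodComm ℕ ℕ).toEmbedding) q p C y x where
  fst_le := by simpa using fun a b hab => h.snd_le _ hab
  snd_le := by simpa using fun a b hab => h.fst_le _ hab
  isChain := by
    rw [Finset.coe_map]
    exact h.isChain.image_of_map_rel _ _ _ fun _ _ hab => Prod.swap_le_swap.2 hab
  zero_mem := by simpa using h.zero_mem
  rowCard_last := by rw [rowCard_map_prodComm, h.colCard_last]
  colCard_last := by rw [colCard_map_prodComm, h.rowCard_last]
  closed := by rw [rowCard_map_prodComm, colCard_map_prodComm, add_comm, h.closed]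

theorem close (h : Staircase E p q C x y) : Staircase E (p + 1) q (x ::ₘ C) 0 y where
  fst_le e he := (h.fst_le e he).trans p.le_succ
  snd_le := h.snd_le
  isChain := h.isChain
  zero_mem := h.zero_mem
  rowCard_last := rowCard_eq_zero fun e he => (Nat.lt_succ_of_le (h.fst_le e he)).ne
  colCard_last := h.colCard_last
  closed := by
    rw [Multiset.range_succ, Multiset.map_cons, Multiset.cons_add, h.closed, h.rowCard_last]

theorem edge (h : Staircase E p q C 0 y) : Staircase (insert (p, q) E) p q C 1 (y + 1) := by
  have hnotMem : (p, q) ∉ E := fun hmem => (rowCard_pos hmem).ne' h.rowCard_last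
  exact
  { fst_le := (Finset.forall_mem_insert _ _ _).2 ⟨le_rfl, h.fst_le⟩
    snd_le := (Finset.forall_mem_insert _ _ _).2 ⟨le_rfl, h.snd_le⟩
    isChain := by
      rw [Finset.coe_insert]
      exact h.isChain.insert fun e he _ => .inr ⟨h.fst_le e he, h.snd_le e he⟩
    zero_mem := Finset.mem_insert_of_mem h.zero_mem
    rowCard_last := by rw [rowCard_insert hnotMem, h.rowCard_last, if_pos rfl]
    colCard_last := by rw [colCard_insert hnotMem, h.colCard_last, if_pos rfl]
    closed := by
      rw [← h.closed]
      congr 1 <;> refine Multiset.map_congr rfl fun k hk => ?_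
      · rw [rowCard_insert hnotMem, if_neg (Multiset.mem_range.1 hk).ne', add_zero]
      · rw [colCard_insert hnotMem, if_neg (Multiset.mem_range.1 hk).ne', add_zero] }

end Staircase

theorem Zigzag.exists_staircase (h : Zigzag C x y) : ∃ E p q, Staircase E p q C x y := by
  induction h with
  | start => exact ⟨_, _, _, .start⟩
  | swap _ ih => obtain ⟨E, p, q, h⟩ := ih; exact ⟨_, _, _, h.swap⟩
  | close _ ih => obtain ⟨E, p, q, h⟩ := ih; exact ⟨_, _, _, h.close⟩
  | edge _ ih => obtain ⟨E, p, q, h⟩ := ih; exact ⟨_, _, _, h.edge⟩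

end Staircase

section Drawing

/-- The `i`-th top vertex of a drawing on the cycle: the top line runs forwards from `0`, which
itself stays free. -/
def topVertex (n i : ℕ) : ZMod n := (i + 1 : ℕ)

/-- The `j`-th bottom vertex of a drawing on the cycle: the bottom line runs backwards from `0`,
which itself stays free. -/
def bottomVertex (n j : ℕ) : ZMod n := -(j + 1 : ℕ)

/-- The chords of `ZMod n` that draw the edges of a staircase. -/
def drawing (n : ℕ) (E : Finset (ℕ × ℕ)) : Set (Sym2 (ZMod n)) :=
  (fun e : ℕ × ℕ => s(topVertex n e.1, bottomVertex n e.2)) '' E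

variable {n : ℕ} {i i' j j' : ℕ}

theorem topVertex_ne_bottomVertex (h : i + j + 2 < n) : topVertex n i ≠ bottomVertex n j :=
  fun heq => natCast_ne_zero_of_lt (k := i + j + 2) (by omega) h <| by
    simp only [topVertex, bottomVertex] at heq
    push_cast at heq ⊢
    linear_combination heq

theorem isChord_topVertex_bottomVertex (h : i + j + 3 < n) :
    IsChord n s(topVertex n i, bottomVertex n j) := by
  refine ⟨fun hdiag => topVertex_ne_bottomVertex (by omega) (Sym2.mk_isDiag_iff.1 hdiag), ?_⟩
  rintro ⟨k, hk⟩
  simp only [topVertex, bottomVertex, Sym2.eq_iff] at hk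
  push_cast at hk
  rcases hk with ⟨htop, hbottom⟩ | ⟨htop, hbottom⟩
  · refine natCast_ne_zero_of_lt (k := i + j + 3) (by omega) h ?_
    push_cast
    linear_combination htop - hbottom
  · refine natCast_ne_zero_of_lt (n := n) (k := i + j + 1) (by omega) (by omega) ?_
    push_cast
    linear_combination htop - hbottom

theorem val_topVertex (hi : i + 1 < n) : (topVertex n i).val = i + 1 :=
  ZMod.val_natCast_of_lt hi

theorem topVertex_inj (hi : i + 1 < n) (hi' : i' + 1 < n) :
    topVertex n i = topVertex n i' ↔ i = i' := by
  refine ⟨fun h => ?_, fun h => by rw [h]⟩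
  have := congrArg ZMod.val h
  rwa [val_topVertex hi, val_topVertex hi', add_left_inj] at this

theorem bottomVertex_inj (hj : j + 1 < n) (hj' : j' + 1 < n) :
    bottomVertex n j = bottomVertex n j' ↔ j = j' :=
  neg_inj.trans (topVertex_inj hj hj')

theorem drawing_map_prodComm (E : Finset (ℕ × ℕ)) :
    drawing n (E.map (Equiv.prodComm ℕ ℕ).toEmbedding) = Sym2.map Neg.neg '' drawing n E := by
  rw [drawing, drawing, Finset.coe_map, Set.image_image, Set.image_image]
  refine Set.image_congr fun e _ => ?_
  rw [Sym2.map_mk, Sym2.eq_swap]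
  simp [topVertex, bottomVertex]

variable {E : Finset (ℕ × ℕ)} {p q : ℕ} {C : Multiset ℕ} {x y : ℕ}

theorem Staircase.chordFree_of_forall_ne (h : Staircase E p q C x y) {v : ZMod n}
    (htop : ∀ i ≤ p, v ≠ topVertex n i) (hbottom : ∀ j ≤ q, v ≠ bottomVertex n j) :
    ChordFree n (drawing n E) v := by
  rintro _ ⟨e, he, rfl⟩ hv
  exact (Sym2.mem_iff.1 hv).elim (htop _ (h.fst_le e he)) (hbottom _ (h.snd_le e he))

variable [NeZero n]

theorem val_bottomVertex (hj : j + 1 < n) : (bottomVertex n j).val = n - (j + 1) := by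
  have : NeZero ((j + 1 : ℕ) : ZMod n) := ⟨natCast_ne_zero_of_lt j.succ_pos hj⟩
  rw [bottomVertex, ZMod.val_neg_of_ne_zero, ZMod.val_natCast_of_lt hj]

-- Of the two arcs between the ends of the chord of `e`, one avoids both ends of that of `f`.
theorem not_cross_of_le_or_ge {e f : ℕ × ℕ} (hef : e ≤ f ∨ f ≤ e) (he : e.1 + e.2 + 2 < n)
    (hef' : e.1 + f.2 + 2 < n) (hfe : f.1 + e.2 + 2 < n) :
    ¬ Cross n s(topVertex n e.1, bottomVertex n e.2) s(topVertex n f.1, bottomVertex n f.2) := by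
  have he₁ := val_topVertex (n := n) (i := e.1) (by omega)
  have he₂ := val_bottomVertex (n := n) (j := e.2) (by omega)
  have hf₁ := val_topVertex (n := n) (i := f.1) (by omega)
  have hf₂ := val_bottomVertex (n := n) (j := f.2) (by omega)
  intro hcross
  rcases hef with ⟨h₁, h₂⟩ | ⟨h₁, h₂⟩
  · rcases hcross _ _ _ _ Sym2.eq_swap rfl with ⟨h, -⟩ | ⟨h, -⟩ <;>
      rw [between_iff_val] at h <;> omega
  · rcases hcross _ _ _ _ rfl rfl with ⟨h, -⟩ | ⟨h, -⟩ <;> rw [between_iff_val] at h <;> omega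

namespace Staircase

theorem nonCrossingChords (h : Staircase E p q C x y) (hn : p + q + 4 ≤ n) :
    NonCrossingChords n (drawing n E) := by
  constructor
  · rintro _ ⟨e, he, rfl⟩
    have := h.fst_le e he
    have := h.snd_le e he
    exact isChord_topVertex_bottomVertex (by omega)
  · rintro _ ⟨e, he, rfl⟩ _ ⟨f, hf, rfl⟩ -
    have := h.fst_le e he
    have := h.snd_le e he
    have := h.fst_le f hf
    have := h.snd_le f hf
    exact not_cross_of_le_or_ge (h.isChain.total he hf) (by omega) (by omega) (by omega)

theorem ncard_neighborSet_topVertex (h : Staircase E p q C x y) (hn : p + q + 4 ≤ n)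
    (hi : i ≤ p) : ((chordGraph n (drawing n E)).neighborSet (topVertex n i)).ncard =
      rowCard E i := by
  have hneighborSet : (chordGraph n (drawing n E)).neighborSet (topVertex n i) =
      (fun e => bottomVertex n e.2) '' (E.filter (·.1 = i) : Set (ℕ × ℕ)) := by
    ext v
    rw [SimpleGraph.mem_neighborSet, (h.nonCrossingChords hn).chordGraph_adj]
    constructor
    · rintro ⟨e, he, heq⟩
      have := h.fst_le e he
      have := h.snd_le e he
      rcases Sym2.eq_iff.1 heq with ⟨htop, hv⟩ | ⟨-, hbottom⟩
      · rw [topVertex_inj (by omega) (by omega)] at htop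
        exact ⟨e, Finset.mem_filter.2 ⟨he, htop⟩, hv⟩
      · exact absurd hbottom.symm (topVertex_ne_bottomVertex (by omega))
    · rintro ⟨e, he, rfl⟩
      obtain ⟨hmem, rfl⟩ := Finset.mem_filter.1 he
      exact ⟨e, hmem, rfl⟩
  rw [hneighborSet, Set.InjOn.ncard_image, Set.ncard_coe_finset, rowCard]
  intro e he f hf heq
  obtain ⟨he, hei⟩ := Finset.mem_filter.1 he
  obtain ⟨hf, hfi⟩ := Finset.mem_filter.1 hf
  have := h.snd_le e he
  have := h.snd_le f hf
  exact Prod.ext (hei.trans hfi.symm) ((bottomVertex_inj (by omega) (by omega)).1 heq)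

theorem ncard_neighborSet_bottomVertex (h : Staircase E p q C x y) (hn : p + q + 4 ≤ n)
    (hj : j ≤ q) : ((chordGraph n (drawing n E)).neighborSet (bottomVertex n j)).ncard =
      colCard E j := by
  have hreflect : (chordGraph n (drawing n E)).neighborSet (bottomVertex n j) = (Neg.neg ''
      (chordGraph n (drawing n (E.map (Equiv.prodComm ℕ ℕ).toEmbedding))).neighborSet
        (topVertex n j)) := by
    ext v
    rw [Set.image_neg_eq_neg, Set.mem_neg, SimpleGraph.mem_neighborSet,
      SimpleGraph.mem_neighborSet, (h.nonCrossingChords hn).chordGraph_adj,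
      (h.swap.nonCrossingChords (by omega)).chordGraph_adj, drawing_map_prodComm,
      ← (Sym2.map.injective neg_injective).mem_set_image, Sym2.map_mk, bottomVertex, neg_neg]
    rfl
  rw [hreflect, Set.ncard_image_of_injective _ neg_injective,
    h.swap.ncard_neighborSet_topVertex (by omega) hj, rowCard_map_prodComm]

end Staircase

end Drawing

section DrawingDegrees

/-- The vertices of the cycle used by a drawing with `p + 1` top and `q + 1` bottom vertices. -/
def drawnVertices (n p q : ℕ) : Multiset (ZMod n) :=
  (Multiset.range (p + 1)).map (topVertex n) + (Multiset.range (q + 1)).map (bottomVertex n)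

variable {n : ℕ} {p q i j : ℕ} {E : Finset (ℕ × ℕ)} {C : Multiset ℕ} {x y : ℕ}

theorem nodup_drawnVertices (hn : p + q + 2 < n) : (drawnVertices n p q).Nodup := by
  refine Multiset.nodup_add.2 ⟨?_, ?_, ?_⟩
  · refine (Multiset.nodup_range _).map_on fun i hi i' hi' heq => ?_
    rw [Multiset.mem_range] at hi hi'
    exact (topVertex_inj (by omega) (by omega)).1 heq
  · refine (Multiset.nodup_range _).map_on fun j hj j' hj' heq => ?_
    rw [Multiset.mem_range] at hj hj'
    exact (bottomVertex_inj (by omega) (by omega)).1 heq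
  · refine Multiset.disjoint_map_map.2 fun i hi j hj => topVertex_ne_bottomVertex ?_
    rw [Multiset.mem_range] at hi hj
    omega

theorem Staircase.chordFree_of_notMem (h : Staircase E p q C x y) {v : ZMod n}
    (hv : v ∉ drawnVertices n p q) : ChordFree n (drawing n E) v := by
  refine h.chordFree_of_forall_ne (fun i hi heq => hv ?_) fun j hj heq => hv ?_
  · exact Multiset.mem_add.2
      (.inl (heq ▸ Multiset.mem_map_of_mem _ (Multiset.mem_range.2 (Nat.lt_succ_of_le hi))))
  · exact Multiset.mem_add.2
      (.inr (heq ▸ Multiset.mem_map_of_mem _ (Multiset.mem_range.2 (Nat.lt_succ_of_le hj))))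

variable [NeZero n]

theorem Staircase.map_ncard_neighborSet_drawnVertices (h : Staircase E p q C x y)
    (hn : p + q + 4 ≤ n) : (drawnVertices n p q).map
      (fun v => ((chordGraph n (drawing n E)).neighborSet v).ncard) = x ::ₘ y ::ₘ C := by
  have htop : (Multiset.range (p + 1)).map
      (fun i => ((chordGraph n (drawing n E)).neighborSet (topVertex n i)).ncard) =
      (Multiset.range (p + 1)).map (rowCard E) := Multiset.map_congr rfl fun i hi =>
    h.ncard_neighborSet_topVertex hn (Nat.le_of_lt_succ (Multiset.mem_range.1 hi))
  have hbottom : (Multiset.range (q + 1)).map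
      (fun j => ((chordGraph n (drawing n E)).neighborSet (bottomVertex n j)).ncard) =
      (Multiset.range (q + 1)).map (colCard E) := Multiset.map_congr rfl fun j hj =>
    h.ncard_neighborSet_bottomVertex hn (Nat.le_of_lt_succ (Multiset.mem_range.1 hj))
  simp only [drawnVertices, Multiset.map_add, Multiset.map_map, Function.comp_def]
  rw [htop, hbottom, Multiset.range_succ, Multiset.range_succ, Multiset.map_cons,
    Multiset.map_cons, h.rowCard_last, h.colCard_last, Multiset.cons_add, Multiset.add_cons,
    h.closed]

theorem Staircase.degMultiset_eq (h : Staircase E p q C x y) (hn : p + q + 4 ≤ n) :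
    degMultiset (chordGraph n (drawing n E)) =
      x ::ₘ y ::ₘ C + Multiset.replicate (n - (p + q + 2)) 0 := by
  obtain ⟨R, hR⟩ := Multiset.le_iff_exists_add.1 <|
    (Multiset.le_iff_subset (nodup_drawnVertices (by omega : p + q + 2 < n))).2
      fun v _ => Finset.mem_univ_val v
  have hcard : R.card = n - (p + q + 2) := by
    have := congrArg Multiset.card hR
    simp only [drawnVertices, Multiset.card_add, Multiset.card_map, Multiset.card_range,
      Finset.card_val, Finset.card_univ, ZMod.card] at this
    omega
  have hisolated : ∀ v ∈ R, ((chordGraph n (drawing n E)).neighborSet v).ncard = 0 := by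
    intro v hv
    have hnodup : (drawnVertices n p q + R).Nodup := hR ▸ Finset.univ.nodup
    have hfree := h.chordFree_of_notMem fun hmem =>
      Multiset.disjoint_left.1 (Multiset.nodup_add.1 hnodup).2.2 hmem hv
    rw [(h.nonCrossingChords hn).chordFree_iff, SimpleGraph.mem_support, not_exists] at hfree
    rw [Set.ncard_eq_zero]
    exact Set.eq_empty_of_forall_notMem hfree
  rw [degMultiset_eq_map_ncard, hR, Multiset.map_add, h.map_ncard_neighborSet_drawnVertices hn,
    Multiset.map_congr rfl hisolated, Multiset.map_const', hcard]

end DrawingDegrees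

section ConsecutiveChordFree

variable {n : ℕ} {p q i j : ℕ} {E : Finset (ℕ × ℕ)} {C : Multiset ℕ} {x y : ℕ}

theorem four_le_ncard_of_consecutive [NeZero n] {F : Set (ZMod n)} {a b v : ZMod n}
    (ha : a ∈ F) (hb : b ∈ F) (hab : a ≠ b) (ha_pred : a - 1 ∉ F) (ha_succ : a + 1 ∉ F)
    (hb_pred : b - 1 ∉ F) (hb_succ : b + 1 ∉ F) (hv : v ∈ F) (hv' : v + 1 ∈ F) : 4 ≤ F.ncard := by
  have hne {u : ZMod n} (hpred : u - 1 ∉ F) (hsucc : u + 1 ∉ F) : u ≠ v ∧ u ≠ v + 1 :=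
    ⟨fun h => hsucc (h ▸ hv'), fun h => hpred (by rwa [h, add_sub_cancel_right])⟩
  have hv_ne : v ≠ v + 1 := fun h => ha_succ (by rwa [left_eq_add.1 h, add_zero])
  have hcard : ({a, b, v, v + 1} : Set (ZMod n)).ncard = 4 := by
    rw [Set.ncard_insert_of_notMem, Set.ncard_insert_of_notMem, Set.ncard_pair hv_ne]
    · simpa using hne hb_pred hb_succ
    · simpa using ⟨hab, hne ha_pred ha_succ⟩
  rw [← hcard]
  refine Set.ncard_le_ncard ?_
  rintro u (rfl | rfl | rfl | rfl) <;> assumption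

theorem not_chordFree_topVertex (h : 0 < rowCard E i) :
    ¬ ChordFree n (drawing n E) (topVertex n i) := by
  obtain ⟨e, he⟩ := Finset.card_pos.1 h
  obtain ⟨hmem, rfl⟩ := Finset.mem_filter.1 he
  exact fun hfree => hfree _ ⟨e, hmem, rfl⟩ (Sym2.mem_mk_left _ _)

theorem not_chordFree_bottomVertex (h : 0 < colCard E j) :
    ¬ ChordFree n (drawing n E) (bottomVertex n j) := by
  obtain ⟨e, he⟩ := Finset.card_pos.1 h
  obtain ⟨hmem, rfl⟩ := Finset.mem_filter.1 he
  exact fun hfree => hfree _ ⟨e, hmem, rfl⟩ (Sym2.mem_mk_right _ _)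

namespace Staircase

theorem chordFree_zero (h : Staircase E p q C x y) (hn : p + q + 2 < n) :
    ChordFree n (drawing n E) 0 := by
  refine h.chordFree_of_forall_ne (fun i hi => ?_) fun j hj => ?_
  · exact (natCast_ne_zero_of_lt i.succ_pos (by omega)).symm
  · exact (neg_ne_zero.2 (natCast_ne_zero_of_lt j.succ_pos (by omega))).symm

theorem chordFree_topVertex (h : Staircase E p q C x y) (hi : p < i) (hn : i + q + 2 < n) :
    ChordFree n (drawing n E) (topVertex n i) := by
  refine h.chordFree_of_forall_ne (fun i' hi' => ?_) fun j hj => ?_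
  · rw [ne_eq, topVertex_inj (by omega) (by omega)]
    omega
  · exact topVertex_ne_bottomVertex (by omega)

theorem chordFree_consecutive (h : Staircase E p q C x y) (hn : p + q + 5 ≤ n) :
    ∃ v, ChordFree n (drawing n E) v ∧ ChordFree n (drawing n E) (v + 1) := by
  refine ⟨topVertex n (p + 1), h.chordFree_topVertex (by omega) (by omega), ?_⟩
  have hsucc : topVertex n (p + 1) + 1 = topVertex n (p + 2) := by
    simp only [topVertex]
    push_cast
    ring
  exact hsucc ▸ h.chordFree_topVertex (by omega) (by omega)

-- The two gaps between the lines consist of the single vertices `0` and `w`, each flanked by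
-- vertices on chords.
theorem not_chordFree_consecutive (h : Staircase E p q C x y) (hn : p + q + 4 = n)
    (hx : 0 < x) (hy : 0 < y) (hfree : {v | ChordFree n (drawing n E) v}.ncard = 3) (v : ZMod n)
    (hv : ChordFree n (drawing n E) v) : ¬ ChordFree n (drawing n E) (v + 1) := by
  intro hv'
  have : NeZero n := ⟨by omega⟩
  set w := topVertex n (p + 1) with hw
  have hw_free : ChordFree n (drawing n E) w := h.chordFree_topVertex (by omega) (by omega)
  have hw_ne : 0 ≠ w := (natCast_ne_zero_of_lt (k := p + 1 + 1) (by omega) (by omega)).symm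
  have hzero_succ : ¬ ChordFree n (drawing n E) (0 + 1) := by
    simpa [topVertex] using not_chordFree_topVertex (n := n) (rowCard_pos h.zero_mem)
  have hzero_pred : ¬ ChordFree n (drawing n E) (0 - 1) := by
    simpa [bottomVertex] using not_chordFree_bottomVertex (n := n) (colCard_pos h.zero_mem)
  have hw_pred : ¬ ChordFree n (drawing n E) (w - 1) := by
    simpa [hw, topVertex] using not_chordFree_topVertex (n := n) (h.rowCard_last ▸ hx)
  have hw_succ : ¬ ChordFree n (drawing n E) (w + 1) := by
    have hcast : w + 1 = bottomVertex n q := by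
      have hself : ((p + q + 4 : ℕ) : ZMod n) = 0 := by rw [hn, ZMod.natCast_self]
      simp only [hw, topVertex, bottomVertex]
      push_cast at hself ⊢
      linear_combination hself
    exact hcast ▸ not_chordFree_bottomVertex (h.colCard_last ▸ hy)
  have hfour := four_le_ncard_of_consecutive (F := {v | ChordFree n (drawing n E) v})
    (h.chordFree_zero (by omega)) hw_free hw_ne hzero_pred hzero_succ hw_pred hw_succ hv hv'
  omega

end Staircase

end ConsecutiveChordFree

section Isomorphism

variable {n : ℕ} {G G' : SimpleGraph (ZMod n)} {S S' : Set (Sym2 (ZMod n))} {v : ZMod n}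

theorem NonCrossingChords.exists_edgeSet_eq (hS : NonCrossingChords n S) (hn : 1 < n) :
    ∃ G : SimpleGraph (ZMod n), G.edgeSet = {e | IsCycleEdge n e} ∪ S := by
  refine ⟨SimpleGraph.fromEdgeSet ({e | IsCycleEdge n e} ∪ S), ?_⟩
  rw [SimpleGraph.edgeSet_fromEdgeSet, sdiff_eq_left, Set.disjoint_left]
  rintro e (⟨i, rfl⟩ | he) hdiag
  · have : Fact (1 < n) := ⟨hn⟩
    simp at hdiag
  · exact (hS.1 e he).1 hdiag

variable [NeZero n]

theorem NonCrossingChords.chordFree_iff_ncard_neighborSet (hS : NonCrossingChords n S)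
    (hn : 3 ≤ n) (hES : G.edgeSet = {e | IsCycleEdge n e} ∪ S) :
    ChordFree n S v ↔ (G.neighborSet v).ncard = 2 := by
  rw [ncard_neighborSet_eq_add_two hn hS hES, hS.chordFree_iff, Nat.add_eq_right,
    Set.ncard_eq_zero, SimpleGraph.mem_support, not_exists, Set.eq_empty_iff_forall_notMem]
  rfl

theorem exists_chordFree_consecutive_of_iso (hn : 3 ≤ n) (hS : NonCrossingChords n S)
    (hES : G.edgeSet = {e | IsCycleEdge n e} ∪ S) (hS' : NonCrossingChords n S')
    (hES' : G'.edgeSet = {e | IsCycleEdge n e} ∪ S') (f : G ≃g G')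
    (h : ∃ v, ChordFree n S v ∧ ChordFree n S (v + 1)) :
    ∃ v, ChordFree n S' v ∧ ChordFree n S' (v + 1) := by
  obtain ⟨v, hv, hsucc⟩ := h
  have hmap {u : ZMod n} (hu : ChordFree n S u) : ChordFree n S' (f u) := by
    rw [hS.chordFree_iff_ncard_neighborSet hn hES] at hu
    rw [hS'.chordFree_iff_ncard_neighborSet hn hES', ← hu]
    exact (Nat.card_congr (f.mapNeighborSet u)).symm
  have hadj : G.Adj v (v + 1) := by
    rw [← SimpleGraph.mem_edgeSet, hES]
    exact .inl ⟨v, rfl⟩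
  have hadj' : s(f v, f (v + 1)) ∈ G'.edgeSet := f.map_adj_iff.2 hadj
  rw [hES'] at hadj'
  rcases hadj' with ⟨i, hi⟩ | hchord
  · rcases Sym2.eq_iff.1 hi with ⟨h₁, h₂⟩ | ⟨h₁, h₂⟩
    · exact ⟨i, h₁ ▸ hmap hv, h₂ ▸ hmap hsucc⟩
    · exact ⟨i, h₂ ▸ hmap hsucc, h₁ ▸ hmap hv⟩
  · exact absurd (Sym2.mem_mk_left _ _) (hmap hv _ hchord)

theorem OuterplaneUnigraphic.exists_chordFree_consecutive {D : Multiset ℕ}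
    (huni : OuterplaneUnigraphic n (D.map (· + 2))) (hn : 3 ≤ n) (hS : NonCrossingChords n S)
    (hS' : NonCrossingChords n S') (hD : degMultiset (chordGraph n S) = D)
    (hD' : degMultiset (chordGraph n S') = D) (h : ∃ v, ChordFree n S v ∧ ChordFree n S (v + 1)) :
    ∃ v, ChordFree n S' v ∧ ChordFree n S' (v + 1) := by
  obtain ⟨G, hES⟩ := hS.exists_edgeSet_eq (by omega)
  obtain ⟨G', hES'⟩ := hS'.exists_edgeSet_eq (by omega)
  obtain ⟨f⟩ := huni.2 G G' ⟨S, hS, hES⟩ ⟨S', hS', hES'⟩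
    (by rw [degreeMultiset_eq_degMultiset, degMultiset_eq_map_add_two hn hS hES, hD])
    (by rw [degreeMultiset_eq_degMultiset, degMultiset_eq_map_add_two hn hS' hES', hD'])
  exact exists_chordFree_consecutive_of_iso hn hS hES hS' hES' f h

end Isomorphism

section Realisations

variable {n : ℕ} [NeZero n]

-- Either all three chord-free vertices lie between the two lines, two of them adjacent, or one of
-- them is put on a line and no two are adjacent.
theorem Zigzag.not_outerplaneUnigraphic {C : Multiset ℕ} {x y : ℕ} (h : Zigzag C x y)
    (hpos : ∀ d ∈ x ::ₘ y ::ₘ C, 0 < d) (hC : C ≠ 0) (hn : C.card + 5 = n) :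
    ¬ OuterplaneUnigraphic n ((x ::ₘ y ::ₘ C + Multiset.replicate 3 0).map (· + 2)) := by
  intro huni
  obtain ⟨E, p, q, hE⟩ := h.exists_staircase
  obtain ⟨E', p', q', hE'⟩ := (h.eq_zero_or_cons_zero.resolve_left hC).exists_staircase
  have hcard := hE.card_eq
  have hcard' := hE'.card_eq
  rw [Multiset.card_cons] at hcard'
  have hS' := hE'.nonCrossingChords (n := n) (by omega)
  have hD : degMultiset (chordGraph n (drawing n E)) =
      x ::ₘ y ::ₘ C + Multiset.replicate 3 0 := by
    rw [hE.degMultiset_eq (by omega), show n - (p + q + 2) = 3 by omega]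
  have hD' : degMultiset (chordGraph n (drawing n E')) =
      x ::ₘ y ::ₘ C + Multiset.replicate 3 0 := by
    rw [hE'.degMultiset_eq (by omega), show n - (p' + q' + 2) = 2 by omega,
      Multiset.replicate_succ 0 2, Multiset.add_cons, Multiset.cons_swap y, Multiset.cons_swap x,
      Multiset.cons_add]
  obtain ⟨v, hv, hv'⟩ := huni.exists_chordFree_consecutive (by omega)
    (hE.nonCrossingChords (by omega)) hS' hD hD' (hE.chordFree_consecutive (by omega))
  have hfree : {v | ChordFree n (drawing n E') v}.ncard = 3 := by
    rw [← hS'.count_zero_degMultiset, hD', Multiset.count_add, Multiset.count_replicate_self,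
      Multiset.count_eq_zero_of_notMem fun hmem => (hpos 0 hmem).false]
  exact hE'.not_chordFree_consecutive (by omega) (hpos x (by simp)) (hpos y (by simp)) hfree
    v hv hv'

theorem OuterplaneUnigraphic.two_mul_le_sum_add_six {D : Multiset ℕ} (hn : 6 ≤ n)
    (hcard : D.card = n) (hzero : D.count 0 = 3) (heven : Even D.sum)
    (huni : OuterplaneUnigraphic n (D.map (· + 2))) : 2 * n ≤ D.sum + 6 := by
  by_contra! hlt
  obtain ⟨P, hpos, rfl⟩ : ∃ P : Multiset ℕ, (∀ d ∈ P, 0 < d) ∧ D = P + Multiset.replicate 3 0 := by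
    refine ⟨D.filter (¬ 0 = ·), fun d hd => ?_, ?_⟩
    · exact Nat.pos_of_ne_zero fun h => Multiset.of_mem_filter hd h.symm
    · rw [← hzero, ← Multiset.filter_eq, add_comm, Multiset.filter_add_not]
  simp only [Multiset.card_add, Multiset.card_replicate, Multiset.sum_add,
    Multiset.sum_replicate, smul_zero, add_zero] at hcard heven hlt
  have hsum : P.sum + 2 ≤ 2 * P.card := by
    obtain ⟨m, hm⟩ := heven
    omega
  obtain ⟨C, x, y, hzigzag, rfl⟩ := Zigzag.exists_of_sum_le hpos heven hsum
  rw [Multiset.card_cons, Multiset.card_cons] at hcard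
  have hC : C ≠ 0 := fun h => by
    rw [h, Multiset.card_zero] at hcard
    omega
  exact hzigzag.not_outerplaneUnigraphic hpos hC hcard huni

end Realisations

/-- The paper's Lemma 5: if `M` (entries at least `2`, exactly three entries
equal to `2`, `n ≥ 6`) is outerplane-unigraphic, then for every outerplane
realisation the chord graph has exactly one cycle, which is a triangle, and
deleting the chord-free vertices leaves a connected graph. -/
theorem unique_triangle_lemma (n : ℕ) (hn : 6 ≤ n) (M : Multiset ℕ)
    (hcard : Multiset.card M = n)
    (hge : ∀ m ∈ M, 2 ≤ m)
    (hthree : M.count 2 = 3)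
    (huni : OuterplaneUnigraphic n M)
    (G : SimpleGraph (ZMod n)) (hG : IsOuterplane n G)
    (hdeg : degreeMultiset n G = M)
    (S : Set (Sym2 (ZMod n))) (hS : NonCrossingChords n S)
    (hES : G.edgeSet = {e | IsCycleEdge n e} ∪ S) :
    (∃ (v : ZMod n) (c : (chordGraph n S).Walk v v), c.IsCycle ∧ c.length = 3 ∧
        ∀ (w : ZMod n) (d : (chordGraph n S).Walk w w), d.IsCycle →
          ∀ x : ZMod n, x ∈ d.support ↔ x ∈ c.support) ∧
      ((chordGraph n S).induce {u : ZMod n | ¬ ChordFree n S u}).Connected := by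
  have : NeZero n := ⟨by omega⟩
  set D := degMultiset (chordGraph n S)
  obtain rfl : D.map (· + 2) = M := by
    rw [← hdeg, degreeMultiset_eq_degMultiset, degMultiset_eq_map_add_two (by omega) hS hES]
  have hzero : D.count 0 = 3 := by
    rwa [← Multiset.count_map_eq_count' _ _ (add_left_injective 2)]
  have hfree : {v | ChordFree n S v}.ncard = 3 := by rw [← hS.count_zero_degMultiset, hzero]
  have hsum : D.sum = 2 * (chordGraph n S).edgeSet.ncard := sum_degMultiset _
  have hchords := huni.two_mul_le_sum_add_six hn (by rw [card_degMultiset, ZMod.card]) hzero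
    (hsum ▸ even_two_mul _)
  have hsupport : {u | ¬ ChordFree n S u} = (chordGraph n S).support := by
    ext u
    exact not_iff_comm.1 hS.chordFree_iff.symm
  rw [hsupport]
  exact hS.exists_unique_triangle hfree (by omega) (by omega)
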